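/- arXiv:2209.08519 — 15 statements merged into one kernel-verified Lean document; each statement's English description precedes it below -/
import Mathlib

section
/- Let M be a right R-module with endomorphism ring S = End_R(M). If M is an abelian Rickart module (i.e., every kernel of an endomorphism of M is a direct summand of M and every idempotent of S is central in S), then M is a centrally endo-AIP module. -/
/-- A submodule `N` of `M` is *fully invariant* if it is stable under every
endomorphism of `M`. -/
def IsFullyInvariant {R M : Type*} [Ring R] [AddCommGroup M] [Module R M]
    (N : Submodule R M) : Prop :=
  ∀ φ : Module.End R M, ∀ n ∈ N, φ n ∈ N

/-- `M` is a *centrally endo-AIP* module: for every fully invariant submodule `N`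
of `M`, the left annihilator of `N` in `S = End_R(M)` is a centrally s-unital
ideal of `S`, i.e. every `φ` annihilating `N` satisfies `φ * ψ = φ` for some
central element `ψ` of `S` annihilating `N`. -/
def IsCentrallyEndoAIP (R M : Type*) [Ring R] [AddCommGroup M] [Module R M] : Prop :=
  ∀ N : Submodule R M, IsFullyInvariant N →
    ∀ φ : Module.End R M, (∀ n ∈ N, φ n = 0) →
      ∃ ψ : Module.End R M, (∀ n ∈ N, ψ n = 0) ∧
        (∀ g : Module.End R M, ψ * g = g * ψ) ∧ φ * ψ = φ

/-- `M` is an *endo-AIP* module: for every fully invariant submodule `N` of `M`,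
the left annihilator of `N` in `S = End_R(M)` is a right s-unital ideal of `S`. -/
def IsEndoAIP (R M : Type*) [Ring R] [AddCommGroup M] [Module R M] : Prop :=
  ∀ N : Submodule R M, IsFullyInvariant N →
    ∀ φ : Module.End R M, (∀ n ∈ N, φ n = 0) →
      ∃ ψ : Module.End R M, (∀ n ∈ N, ψ n = 0) ∧ φ * ψ = φ

/-- A ring `S` is a *(left) centrally AIP* ring: the left annihilator of every
two-sided ideal of `S` is a centrally s-unital ideal of `S`. -/
def IsCentrallyAIPRing (S : Type*) [Ring S] : Prop :=
  ∀ I : TwoSidedIdeal S, ∀ a : S, (∀ x ∈ I, a * x = 0) →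
    ∃ z : S, (∀ x ∈ I, z * x = 0) ∧ (∀ s : S, z * s = s * z) ∧ a * z = a

/-- An abelian Rickart module is a centrally endo-AIP module. -/
theorem stmt_0 (R M : Type*) [Ring R] [AddCommGroup M] [Module R M]
    (hRickart : ∀ φ : Module.End R M, ∃ N' : Submodule R M, IsCompl (LinearMap.ker φ) N')
    (hAbelian : ∀ e : Module.End R M, e * e = e → ∀ g : Module.End R M, e * g = g * e) :
    IsCentrallyEndoAIP R M := by
  intro N _ φ hφ
  obtain ⟨N', hN'⟩ := hRickart φ
  refine ⟨N'.projection _ hN'.symm, fun n hn => ?_, hAbelian _ ?_, ?_⟩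
  · exact (Submodule.projection_apply_eq_zero_iff hN'.symm).2 (hφ n hn)
  · exact Submodule.isIdempotentElem_projection hN'.symm
  · ext x
    have hx := Submodule.sub_projection_mem hN'.symm x
    rw [LinearMap.mem_ker, map_sub, sub_eq_zero] at hx
    exact hx.symm
end

section
/- Let M be a right R-module with endomorphism ring S = End_R(M). If M is a reduced Rickart module, then M is a centrally endo-AIP module. -/
/-- In a reduced module every idempotent endomorphism is central. -/
theorem IsIdempotentElem.commute_of_reduced {R M : Type*} [Ring R] [AddCommGroup M] [Module R M]
    (hReduced : ∀ (φ : Module.End R M) (m : M), φ m = 0 →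
      ∀ x : M, (∃ y : M, φ y = x) → (∃ ψ : Module.End R M, ψ m = x) → x = 0)
    {e : Module.End R M} (he : IsIdempotentElem e) (g : Module.End R M) : Commute e g := by
  have key (f : Module.End R M) (hf : IsIdempotentElem f) : f * g * (1 - f) = 0 := by
    ext m
    have h0 : f ((1 - f) m) = 0 := by
      simpa using LinearMap.congr_fun hf.mul_one_sub_self m
    exact hReduced f _ h0 _ ⟨g ((1 - f) m), rfl⟩ ⟨f * g, rfl⟩
  have h₁ : e * g = e * g * e := by
    simpa [mul_sub, sub_eq_zero] using key e he
  have h₂ : g * e = e * g * e := by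
    simpa [sub_mul, sub_eq_zero] using key (1 - e) he.one_sub
  exact h₁.trans h₂.symm

/-- A reduced Rickart module is a centrally endo-AIP module. -/
theorem stmt_2 (R M : Type*) [Ring R] [AddCommGroup M] [Module R M]
    (hRickart : ∀ φ : Module.End R M, ∃ N' : Submodule R M, IsCompl (LinearMap.ker φ) N')
    (hReduced : ∀ (φ : Module.End R M) (m : M), φ m = 0 →
      ∀ x : M, (∃ y : M, φ y = x) → (∃ ψ : Module.End R M, ψ m = x) → x = 0) :
    IsCentrallyEndoAIP R M := by
  intro N _ φ hφ
  obtain ⟨K, hK⟩ := hRickart φ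
  let e : Module.End R M := K.projection (LinearMap.ker φ) hK.symm
  refine ⟨e, fun n hn => ?_, fun g => ?_, ?_⟩
  · exact (Submodule.projection_apply_eq_zero_iff hK.symm).2 (hφ n hn)
  · exact (Submodule.isIdempotentElem_projection hK.symm).commute_of_reduced hReduced g
  · ext m
    have h : m - e m ∈ LinearMap.ker φ := by
      rw [← Submodule.projection_apply_eq_zero_iff hK.symm, map_sub, sub_eq_zero]
      exact (LinearMap.congr_fun (Submodule.isIdempotentElem_projection hK.symm) m).symm
    rw [LinearMap.mem_ker, map_sub, sub_eq_zero] at h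
    exact h.symm
end

section
/- Let M be a right R-module with endomorphism ring S = End_R(M). If M is a semicommutative Rickart module, then M is a centrally endo-AIP module. -/
/-- Idempotent endomorphisms of a semicommutative module are central. -/
theorem IsIdempotentElem.commute_of_semicommutative {R M : Type*} [Ring R] [AddCommGroup M]
    [Module R M]
    (hSemicomm : ∀ (ψ : Module.End R M) (m : M), ψ m = 0 →
      ∀ φ : Module.End R M, ψ (φ m) = 0)
    {e : Module.End R M} (he : IsIdempotentElem e) (g : Module.End R M) : e * g = g * e := by
  have hee (m : M) : e (e m) = e m := LinearMap.congr_fun he.eq m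
  ext m
  have h₁ : e (g (m - e m)) = 0 := hSemicomm e _ (by rw [map_sub, hee, sub_self]) g
  have h₂ : (1 - e) (g (e m)) = 0 :=
    hSemicomm (1 - e) _ (by simp [hee]) g
  rw [map_sub, map_sub, sub_eq_zero] at h₁
  rw [LinearMap.sub_apply, Module.End.one_apply, sub_eq_zero] at h₂
  exact h₁.trans h₂.symm

/-- A semicommutative Rickart module is a centrally endo-AIP module. -/
theorem stmt_3 (R M : Type*) [Ring R] [AddCommGroup M] [Module R M]
    (hRickart : ∀ φ : Module.End R M, ∃ N' : Submodule R M, IsCompl (LinearMap.ker φ) N')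
    (hSemicomm : ∀ (ψ : Module.End R M) (m : M), ψ m = 0 →
      ∀ φ : Module.End R M, ψ (φ m) = 0) :
    IsCentrallyEndoAIP R M := by
  intro N _ φ hφ
  obtain ⟨N', hN'⟩ := hRickart φ
  refine ⟨N'.projection (LinearMap.ker φ) hN'.symm, fun n hn => ?_,
    (Submodule.isIdempotentElem_projection hN'.symm).commute_of_semicommutative hSemicomm, ?_⟩
  · exact (Submodule.projection_apply_eq_zero_iff hN'.symm).2 (hφ n hn)
  · ext m
    have h := Submodule.sub_projection_mem hN'.symm m
    rw [LinearMap.mem_ker, map_sub, sub_eq_zero] at h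
    exact h.symm
end

section
/- Let M be a right R-module with endomorphism ring S = End_R(M) which has the insertion of factor property (IFP), i.e., for every ψ ∈ S the kernel Ker(ψ) is a fully invariant submodule of M. Then M is a centrally endo-AIP module if and only if M is an endo-AIP module. -/
/-- If every kernel of an endomorphism is fully invariant, then every idempotent
endomorphism is central. -/
theorem IsIdempotentElem.mul_comm_of_isFullyInvariant_ker {R M : Type*} [Ring R]
    [AddCommGroup M] [Module R M]
    (hIFP : ∀ ψ : Module.End R M, IsFullyInvariant (LinearMap.ker ψ))
    {e : Module.End R M} (he : IsIdempotentElem e) (g : Module.End R M) :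
    e * g = g * e := by
  have hee (m : M) : e (e m) = e m := LinearMap.congr_fun he m
  ext m
  have h₁ : e (g (m - e m)) = 0 :=
    hIFP e g (m - e m) (by simp [LinearMap.mem_ker, hee])
  have h₂ : (1 - e) (g (e m)) = 0 :=
    hIFP (1 - e) g (e m) (by simp [LinearMap.mem_ker, hee])
  rw [map_sub, map_sub, sub_eq_zero] at h₁
  rw [LinearMap.sub_apply, Module.End.one_apply, sub_eq_zero] at h₂
  exact h₁.trans h₂.symm

/-- For a module with the insertion of factor property (every kernel of an
endomorphism is fully invariant), centrally endo-AIP is equivalent to endo-AIP. -/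
theorem stmt_4 (R M : Type*) [Ring R] [AddCommGroup M] [Module R M]
    (hIFP : ∀ ψ : Module.End R M, IsFullyInvariant (LinearMap.ker ψ)) :
    IsCentrallyEndoAIP R M ↔ IsEndoAIP R M := by
  refine ⟨fun h N hN φ hφ => ?_, fun h N _ φ hφ => ?_⟩
  · obtain ⟨ψ, hψN, _, hψ⟩ := h N hN φ hφ
    exact ⟨ψ, hψN, hψ⟩
  · obtain ⟨ψ, hψker, hψ⟩ := h (LinearMap.ker φ) (hIFP φ) φ fun _ hn => hn
    -- Since `φ * (1 - ψ) = 0` and `ψ` vanishes on `ker φ`, `ψ` is idempotent.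
    have hidem : IsIdempotentElem ψ := by
      ext m
      have hm : φ (ψ m) = φ m := LinearMap.congr_fun hψ m
      have := hψker (m - ψ m) (by rw [LinearMap.mem_ker, map_sub, hm, sub_self])
      rw [map_sub, sub_eq_zero] at this
      exact this.symm
    exact ⟨ψ, fun n hn => hψker n (hφ n hn),
      hidem.mul_comm_of_isFullyInvariant_ker hIFP, hψ⟩
end

section
/- Every direct summand of a centrally endo-AIP module is a centrally endo-AIP module. That is, if M is a centrally endo-AIP right R-module and N is a direct summand of M, then N is a centrally endo-AIP module. -/
/-- A retract of a centrally endo-AIP module is centrally endo-AIP. -/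
theorem IsCentrallyEndoAIP.of_leftInverse {R M P : Type*} [Ring R] [AddCommGroup M] [Module R M]
    [AddCommGroup P] [Module R P] (hM : IsCentrallyEndoAIP R M) (i : P →ₗ[R] M) (p : M →ₗ[R] P)
    (hpi : ∀ x, p (i x) = x) : IsCentrallyEndoAIP R P := by
  intro L hL φ hφ
  -- The largest fully invariant submodule of `M` that `p` maps into `L`.
  let K : Submodule R M := ⨅ f : Module.End R M, L.comap (p ∘ₗ f)
  have mem_K (m : M) : m ∈ K ↔ ∀ f : Module.End R M, p (f m) ∈ L := by
    simp [K, Submodule.mem_iInf]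
  have hK : IsFullyInvariant K := fun g m hm =>
    (mem_K _).2 fun f => (mem_K m).1 hm (f * g)
  obtain ⟨ψ, hψK, hψ, hφψ⟩ := hM K hK (i ∘ₗ φ ∘ₗ p) fun m hm => by
    simp [hφ (p m) ((mem_K m).1 hm 1)]
  refine ⟨p ∘ₗ ψ ∘ₗ i, fun n hn => ?_, fun g => ?_, ?_⟩
  · have hin : i n ∈ K := (mem_K _).2 fun f => hL (p ∘ₗ f ∘ₗ i) n hn
    simp [hψK _ hin]
  · ext x
    simpa [hpi] using congrArg p (LinearMap.congr_fun (hψ (i ∘ₗ g ∘ₗ p)) (i x))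
  · ext x
    simpa [hpi] using congrArg p (LinearMap.congr_fun hφψ (i x))

/-- Every direct summand of a centrally endo-AIP module is centrally endo-AIP. -/
theorem stmt_5 (R M : Type*) [Ring R] [AddCommGroup M] [Module R M]
    (hM : IsCentrallyEndoAIP R M) (N N' : Submodule R M) (hcompl : IsCompl N N') :
    IsCentrallyEndoAIP R N := by
  exact hM.of_leftInverse N.subtype (N.projectionOnto N' hcompl)
    (Submodule.projectionOnto_apply_left hcompl)
end

section
/- Let M be a centrally endo-AIP right R-module and let N be a fully invariant submodule of M such that every endomorphism ψ of N extends to an endomorphism of M (i.e., for each ψ ∈ End_R(N) there exists φ ∈ End_R(M) whose restriction to N equals ψ). Then N is a centrally endo-AIP module. -/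
/-- A fully invariant submodule of a centrally endo-AIP module, each of whose
endomorphisms extends to an endomorphism of the ambient module, is centrally endo-AIP. -/
theorem stmt_6 (R M : Type*) [Ring R] [AddCommGroup M] [Module R M]
    (hM : IsCentrallyEndoAIP R M) (N : Submodule R M) (hN : IsFullyInvariant N)
    (hext : ∀ ψ : Module.End R N, ∃ φ : Module.End R M, ∀ n : N, φ (n : M) = (ψ n : M)) :
    IsCentrallyEndoAIP R N := by
  intro K hK φ hφ
  obtain ⟨φ', hφ'⟩ := hext φ
  have hK' : IsFullyInvariant (K.map N.subtype) := by
    rintro g _ ⟨k, hk, rfl⟩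
    exact ⟨g.restrict (hN g) k, hK _ k hk, rfl⟩
  obtain ⟨ψ, hψ, hcentral, hunit⟩ := hM _ hK' φ' (by
    rintro _ ⟨k, hk, rfl⟩
    simp [hφ', hφ k hk])
  refine ⟨ψ.restrict (hN ψ), fun k hk => Subtype.ext (hψ k ⟨k, hk, rfl⟩), fun g => ?_, ?_⟩
  · obtain ⟨g', hg'⟩ := hext g
    ext n
    have h := LinearMap.congr_fun (hcentral g') (n : M)
    simp only [Module.End.mul_apply, hg'] at h
    exact h.trans (hg' (ψ.restrict (hN ψ) n))
  · ext n
    have h := LinearMap.congr_fun hunit (n : M)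
    simp only [Module.End.mul_apply, hφ'] at h
    exact (hφ' (ψ.restrict (hN ψ) n)).symm.trans h
end

section
/- Every finitely generated centrally endo-AIP ℤ-module M is torsion-free or semisimple. -/
/-- In a centrally endo-AIP module over a commutative ring, every element killed by a power of
`r` is killed by `r`. -/
theorem IsCentrallyEndoAIP.smul_eq_zero_of_pow_smul_eq_zero {R M : Type*} [CommRing R]
    [AddCommGroup M] [Module R M] (h : IsCentrallyEndoAIP R M) (r : R) (k : ℕ) (x : M)
    (hx : r ^ k • x = 0) : r • x = 0 := by
  obtain ⟨ψ, hψ, -, hr⟩ := h (Submodule.torsionBy R M r)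
    (fun φ n hn ↦ by
      rw [Submodule.mem_torsionBy_iff] at hn ⊢
      rw [← map_smul, hn, map_zero])
    (LinearMap.lsmul R M r) (fun n hn ↦ hn)
  have hsq (y : M) (hy : r • r • y = 0) : r • y = 0 := by
    have hy' : r • ψ y = r • y := LinearMap.congr_fun hr y
    rw [← hy', ← map_smul]
    exact hψ _ hy
  induction k with
  | zero => simp_all
  | succ k ih =>
    cases k with
    | zero => simpa using hx
    | succ k =>
      apply ih
      rw [pow_succ', mul_smul]
      apply hsq
      rwa [← mul_smul, ← mul_smul, mul_assoc, ← pow_succ', ← pow_succ']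

/-- Over a principal ideal domain, a finitely generated torsion centrally endo-AIP module is
semisimple. -/
theorem IsCentrallyEndoAIP.isSemisimpleModule_of_isTorsion {R M : Type*} [CommRing R] [IsDomain R]
    [IsPrincipalIdealRing R] [AddCommGroup M] [Module R M] [Module.Finite R M]
    (h : IsCentrallyEndoAIP R M) (hM : Module.IsTorsion R M) : IsSemisimpleModule R M := by
  classical
  let : StrongNormalizationMonoid R := UniqueFactorizationMonoid.strongNormalizationMonoid
  obtain ⟨a, ha, ha₀⟩ := Submodule.annihilator_top_inter_nonZeroDivisors hM
  replace ha₀ : a ≠ 0 := nonZeroDivisors.ne_zero ha₀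
  obtain ⟨k, b, hk⟩ := UniqueFactorizationMonoid.exists_dvd_radical_self_pow ha₀
  set r := UniqueFactorizationMonoid.radical a
  have hr₀ : r ≠ 0 := UniqueFactorizationMonoid.radical_ne_zero
  have hr : Module.IsTorsionBySet R M (Ideal.span {r}) := by
    rw [Module.isTorsionBySet_span_singleton_iff]
    intro x
    refine h.smul_eq_zero_of_pow_smul_eq_zero r k x ?_
    rw [hk, mul_comm, mul_smul, Submodule.mem_annihilator.mp ha x trivial, smul_zero]
  have : IsReduced (R ⧸ Ideal.span {r}) := by
    rw [← Ideal.isRadical_iff_quotient_reduced, ← isRadical_iff_span_singleton]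
    exact UniqueFactorizationMonoid.isRadical_radical
  have : IsArtinianRing (R ⧸ Ideal.span {r}) := by
    have : Ideal.span {r} ≠ ⊥ := by simpa using hr₀
    refine isArtinianRing_iff_isNoetherianRing_krullDimLE_zero.mpr
      ⟨inferInstance, Ring.KrullDimLE.mk₀ fun P hP ↦ ?_⟩
    have hmax : (P.comap (Ideal.Quotient.mk (Ideal.span {r}))).IsMaximal := by
      refine Ideal.IsPrime.isMaximal inferInstance fun hbot ↦ this ?_
      rw [eq_bot_iff, ← hbot]
      exact Ideal.mk_ker.symm.trans_le (Ideal.ker_le_comap _)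
    have hP' := Ideal.map_eq_top_or_isMaximal_of_surjective (Ideal.Quotient.mk (Ideal.span {r}))
      Ideal.Quotient.mk_surjective hmax
    rw [Ideal.map_comap_of_surjective _ Ideal.Quotient.mk_surjective] at hP'
    exact hP'.resolve_left hP.ne_top
  have := IsArtinianRing.isSemisimpleRing_of_isReduced (R ⧸ Ideal.span {r})
  let := hr.module
  exact hr.isSemisimpleModule_iff.mp inferInstance

/-- Over a principal ideal domain, a finitely generated centrally endo-AIP module with a nonzero
torsion element is torsion. -/
theorem IsCentrallyEndoAIP.isTorsion_of_mem_torsion {R M : Type*} [CommRing R] [IsDomain R]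
    [IsPrincipalIdealRing R] [AddCommGroup M] [Module R M] [Module.Finite R M]
    (h : IsCentrallyEndoAIP R M) {t : M} (ht : t ∈ Submodule.torsion R M) (ht₀ : t ≠ 0) :
    Module.IsTorsion R M := by
  intro x
  by_contra hx
  replace hx : x ∉ Submodule.torsion R M := hx
  have : Nontrivial (M ⧸ Submodule.torsion R M) :=
    Submodule.Quotient.nontrivial_iff.mpr fun htop ↦ hx (htop ▸ Submodule.mem_top)
  let b := Module.Free.chooseBasis R (M ⧸ Submodule.torsion R M)
  obtain ⟨i⟩ := b.index_nonempty
  obtain ⟨y, hy⟩ := Submodule.Quotient.mk_surjective _ (b i)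
  let φ : Module.End R M := (b.coord i ∘ₗ (Submodule.torsion R M).mkQ).smulRight t
  obtain ⟨ψ, hψ, hcentral, hφ⟩ := h (Submodule.torsion R M)
    (fun g n hn ↦ by
      rw [Submodule.mem_torsion_iff] at hn ⊢
      obtain ⟨a, ha⟩ := hn
      exact ⟨a, by rw [← LinearMap.map_smul_of_tower, ha, map_zero]⟩)
    φ (fun n hn ↦ by simp [φ, (Submodule.Quotient.mk_eq_zero _).mpr hn])
  have hφy : φ y = 0 := by
    rw [← hφ, ← hcentral]
    exact hψ _ (Submodule.smul_mem _ _ ht)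
  exact ht₀ (by simpa [φ, hy] using hφy)

/-- Every finitely generated centrally endo-AIP ℤ-module is torsion-free
or semisimple. -/
theorem stmt_7 (M : Type*) [AddCommGroup M] [Module ℤ M] [Module.Finite ℤ M]
    (h : IsCentrallyEndoAIP ℤ M) :
    (∀ (n : ℤ) (m : M), n ≠ 0 → n • m = 0 → m = 0) ∨ IsSemisimpleModule ℤ M := by
  refine or_iff_not_imp_left.mpr fun hM ↦ h.isSemisimpleModule_of_isTorsion ?_
  push Not at hM
  obtain ⟨n, m, hn, hnm, hm⟩ := hM
  exact h.isTorsion_of_mem_torsion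
    ((Submodule.mem_torsion_iff m).mpr ⟨⟨n, mem_nonZeroDivisors_of_ne_zero hn⟩,
      (int_smul_eq_zsmul ‹Module ℤ M› n m).trans hnm⟩) hm
end

section
/- For every prime number p, the ℤ-module M = ℤ ⊕ ℤ/pℤ is not a centrally endo-AIP module. -/
/-- The submodule `r • M` of multiples of a scalar `r` is fully invariant. -/
theorem isFullyInvariant_range_lsmul {R M : Type*} [CommRing R] [AddCommGroup M] [Module R M]
    (r : R) : IsFullyInvariant (LinearMap.range (LinearMap.lsmul R M r)) := by
  rintro φ _ ⟨m, rfl⟩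
  exact ⟨φ m, by simp⟩

/-- For every prime `p`, the ℤ-module `ℤ ⊕ ℤ/pℤ` is not centrally endo-AIP. -/
theorem stmt_8 (p : ℕ) (hp : p.Prime) : ¬ IsCentrallyEndoAIP ℤ (ℤ × ZMod p) := by
  intro h
  have : Fact p.Prime := ⟨hp⟩
  let φ : Module.End ℤ (ℤ × ZMod p) := LinearMap.inr ℤ ℤ (ZMod p) ∘ₗ LinearMap.snd ℤ ℤ (ZMod p)
  let g : Module.End ℤ (ℤ × ZMod p) :=
    LinearMap.inr ℤ ℤ (ZMod p) ∘ₗ Algebra.linearMap ℤ (ZMod p) ∘ₗ LinearMap.fst ℤ ℤ (ZMod p)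
  have hφ : ∀ n ∈ LinearMap.range (LinearMap.lsmul ℤ (ℤ × ZMod p) (p : ℤ)), φ n = 0 := by
    rintro _ ⟨m, rfl⟩
    simp [φ]
  obtain ⟨ψ, hψ, hcomm, hφψ⟩ := h _ (isFullyInvariant_range_lsmul (p : ℤ)) φ hφ
  have hfst : (ψ (1, 0)).1 = 0 := by
    have h0 : (p : ℤ) • ψ (1, 0) = 0 := by
      rw [← map_smul]
      exact hψ _ ⟨(1, 0), rfl⟩
    have h1 := congrArg Prod.fst h0
    simpa [hp.ne_zero] using h1
  have hsnd : ψ (0, 1) = 0 := by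
    have h1 := LinearMap.congr_fun (hcomm g) (1, 0)
    simpa [g, hfst, Prod.mk_zero_zero] using h1
  have h1 := LinearMap.congr_fun hφψ (0, 1)
  simp [φ, hsnd] at h1
end

section
/- If R is a centrally AIP ring, then for every positive integer n the n × n full matrix ring M_n(R) is a centrally AIP ring. -/
/-- In a centrally AIP ring, finitely many elements annihilating a two-sided ideal `I` on the left
have a common central right unit that annihilates `I`. -/
theorem IsCentrallyAIPRing.exists_common_unit {S : Type*} [Ring S] (h : IsCentrallyAIPRing S)
    (I : TwoSidedIdeal S) (s : Finset S) (hs : ∀ a ∈ s, ∀ x ∈ I, a * x = 0) :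
    ∃ z : S, (∀ x ∈ I, z * x = 0) ∧ (∀ r : S, z * r = r * z) ∧ ∀ a ∈ s, a * z = a := by
  classical
  induction s using Finset.induction_on with
  | empty => exact ⟨0, by simp⟩
  | insert a s _ ih =>
    obtain ⟨z, hzI, hzc, hz⟩ := ih fun b hb ↦ hs b (Finset.mem_insert_of_mem hb)
    obtain ⟨w, hwI, hwc, hw⟩ := h I a (hs a (Finset.mem_insert_self a s))
    refine ⟨z + w - z * w, fun x hx ↦ ?_, fun r ↦ ?_, fun b hb ↦ ?_⟩
    · rw [sub_mul, add_mul, mul_assoc, hzI x hx, hwI x hx, mul_zero, add_zero, sub_zero]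
    · rw [sub_mul, add_mul, mul_sub, mul_add, hzc r, hwc r, mul_assoc, hwc r, ← mul_assoc, hzc r,
        mul_assoc]
    · rw [mul_sub, mul_add]
      rcases Finset.mem_insert.mp hb with rfl | hb
      · rw [hzc w, ← mul_assoc, hw, add_sub_cancel_left]
      · rw [← mul_assoc, hz b hb, add_sub_cancel_right]

/-- If a matrix annihilates the matrices over a two-sided ideal `J` on the left, then its
entries annihilate `J` on the left. -/
theorem Matrix.apply_mul_eq_zero_of_forall_mem_matrix {n R : Type*} [Fintype n] [DecidableEq n]
    [Ring R] {J : TwoSidedIdeal R} {A : Matrix n n R} (hA : ∀ M ∈ J.matrix n, A * M = 0)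
    (i j : n) {x : R} (hx : x ∈ J) : A i j * x = 0 := by
  have hM : Matrix.single j j x ∈ J.matrix n := by
    rw [TwoSidedIdeal.mem_matrix]
    intro k l
    rw [Matrix.single_apply]
    split_ifs
    exacts [hx, J.zero_mem]
  simpa using congrFun₂ (hA _ hM) i j

/-- Matrix rings over a centrally AIP ring are centrally AIP. -/
theorem stmt_13 (R : Type*) [Ring R] (h : IsCentrallyAIPRing R) (n : ℕ) (hn : 0 < n) :
    IsCentrallyAIPRing (Matrix (Fin n) (Fin n) R) := by
  classical
  have : Nonempty (Fin n) := ⟨⟨0, hn⟩⟩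
  intro I A hA
  obtain ⟨J, rfl⟩ := (TwoSidedIdeal.equivMatrix (n := Fin n)).surjective I
  obtain ⟨z, hzJ, hzc, hz⟩ := h.exists_common_unit J
    (Finset.univ.image fun p : Fin n × Fin n ↦ A p.1 p.2) (by
      simp only [Finset.mem_image, Finset.mem_univ, true_and]
      rintro _ ⟨p, rfl⟩ x hx
      exact Matrix.apply_mul_eq_zero_of_forall_mem_matrix hA p.1 p.2 hx)
  refine ⟨Matrix.diagonal fun _ ↦ z, fun M hM ↦ ?_, fun M ↦ ?_, ?_⟩
  · ext i j
    rw [Matrix.diagonal_mul]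
    exact hzJ _ ((TwoSidedIdeal.mem_matrix _ J M).mp hM i j)
  · ext i j
    rw [Matrix.diagonal_mul, Matrix.mul_diagonal, hzc]
  · ext i j
    rw [Matrix.mul_diagonal]
    exact hz _ (Finset.mem_image_of_mem (fun p : Fin n × Fin n ↦ A p.1 p.2)
      (Finset.mem_univ (i, j)))
end

section
/- The endomorphism ring of a centrally endo-AIP module is a centrally AIP ring. That is, if M is a centrally endo-AIP right R-module, then S = End_R(M) is a centrally AIP ring. -/
/-- The submodule `I M` generated by the images of the members of a two-sided ideal `I`
of endomorphisms of `M`. -/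
def TwoSidedIdeal.sumRange {R M : Type*} [Ring R] [AddCommGroup M] [Module R M]
    (I : TwoSidedIdeal (Module.End R M)) : Submodule R M :=
  ⨆ x ∈ I, LinearMap.range x

theorem TwoSidedIdeal.isFullyInvariant_sumRange {R M : Type*} [Ring R] [AddCommGroup M]
    [Module R M] (I : TwoSidedIdeal (Module.End R M)) : IsFullyInvariant I.sumRange := by
  intro φ
  change I.sumRange ≤ I.sumRange.comap φ
  refine iSup₂_le fun x hx => ?_
  rintro _ ⟨m, rfl⟩
  have hφx : LinearMap.range (φ * x) ≤ I.sumRange :=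
    le_iSup₂_of_le (φ * x) (I.mul_mem_left φ x hx) le_rfl
  exact hφx ⟨m, rfl⟩

theorem TwoSidedIdeal.forall_mem_sumRange_apply_eq_zero_iff {R M : Type*} [Ring R]
    [AddCommGroup M] [Module R M] (I : TwoSidedIdeal (Module.End R M))
    (φ : Module.End R M) :
    (∀ n ∈ I.sumRange, φ n = 0) ↔ ∀ x ∈ I, φ * x = 0 := by
  change I.sumRange ≤ LinearMap.ker φ ↔ _
  simp only [TwoSidedIdeal.sumRange, iSup_le_iff, LinearMap.range_le_ker_iff]
  rfl

/-- The endomorphism ring of a centrally endo-AIP module is a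
centrally AIP ring. -/
theorem stmt_14 (R M : Type*) [Ring R] [AddCommGroup M] [Module R M]
    (h : IsCentrallyEndoAIP R M) : IsCentrallyAIPRing (Module.End R M) := by
  intro I a ha
  obtain ⟨z, hz, hcomm, haz⟩ := h I.sumRange I.isFullyInvariant_sumRange a
    ((I.forall_mem_sumRange_apply_eq_zero_iff a).2 ha)
  exact ⟨z, (I.forall_mem_sumRange_apply_eq_zero_iff z).1 hz, hcomm, haz⟩
end

section
/- The endomorphism ring of a centrally endo-AIP module is a semiprime ring. That is, if M is a centrally endo-AIP right R-module, then S = End_R(M) is semiprime. -/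
/-- The endomorphism ring of a centrally endo-AIP module is semiprime. -/
theorem stmt_15 (R M : Type*) [Ring R] [AddCommGroup M] [Module R M]
    (h : IsCentrallyEndoAIP R M) :
    ∀ a : Module.End R M, (∀ s : Module.End R M, a * s * a = 0) → a = 0 := by
  intro a ha
  let N : Submodule R M := ⨆ s : Module.End R M, LinearMap.range (s * a)
  have range_le (s : Module.End R M) (m : M) : s (a m) ∈ N :=
    Submodule.mem_iSup_of_mem s ⟨m, rfl⟩
  have invariant : IsFullyInvariant N := by
    intro φ
    have le_comap : N ≤ N.comap φ := by
      refine iSup_le fun s => ?_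
      rintro _ ⟨m, rfl⟩
      exact range_le (φ * s) m
    exact fun n hn => le_comap hn
  have le_ker : N ≤ LinearMap.ker a := by
    refine iSup_le fun s => ?_
    rintro _ ⟨m, rfl⟩
    exact LinearMap.congr_fun (ha s) m
  obtain ⟨ψ, hψ, hcomm, hmul⟩ := h N invariant a fun n hn => le_ker hn
  rw [← hmul, ← hcomm a]
  ext m
  exact hψ (a m) (range_le 1 m)
end

section
/- Let M be a locally principally quasi-retractable right R-module. If S = End_R(M) is a left centrally AIP ring, then M is a centrally endo-AIP module. -/
/-- The endomorphisms of `M` with range in a fully invariant submodule form a two-sided ideal. -/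
def IsFullyInvariant.homIdeal {R M : Type*} [Ring R] [AddCommGroup M] [Module R M]
    {N : Submodule R M} (hN : IsFullyInvariant N) : TwoSidedIdeal (Module.End R M) :=
  .mk' {x | ∀ m, x m ∈ N} (fun _ => N.zero_mem) (fun hx hy m => N.add_mem (hx m) (hy m))
    (fun hx m => N.neg_mem (hx m)) (fun {x _} hy m => hN x _ (hy m)) (fun {_ y} hx m => hx (y m))

theorem IsFullyInvariant.mem_homIdeal {R M : Type*} [Ring R] [AddCommGroup M] [Module R M]
    {N : Submodule R M} (hN : IsFullyInvariant N) {x : Module.End R M} :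
    x ∈ hN.homIdeal ↔ ∀ m, x m ∈ N :=
  TwoSidedIdeal.mem_mk' ..

/-- The right annihilator in `M` of the two-sided ideal of `End_R(M)` generated by `φ`. -/
def rightAnnihilator {R M : Type*} [Ring R] [AddCommGroup M] [Module R M]
    (φ : Module.End R M) : Submodule R M where
  carrier := {m | ∀ a b : Module.End R M, (a * φ * b) m = 0}
  zero_mem' _ _ := map_zero _
  add_mem' hx hy a b := by rw [map_add, hx, hy, add_zero]
  smul_mem' r _ hx a b := by rw [map_smul, hx, smul_zero]

theorem isFullyInvariant_rightAnnihilator {R M : Type*} [Ring R] [AddCommGroup M] [Module R M]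
    (φ : Module.End R M) : IsFullyInvariant (rightAnnihilator φ) :=
  fun g _ hn a b => hn a (b * g)

/-- A locally principally quasi-retractable module whose endomorphism ring
is a left centrally AIP ring is a centrally endo-AIP module. -/
theorem stmt_16 (R M : Type*) [Ring R] [AddCommGroup M] [Module R M]
    (hret : ∀ φ : Module.End R M,
      {m : M | ∀ a b : Module.End R M, (a * φ * b) m = 0} ≠ {0} →
      ∃ ψ : Module.End R M, ψ ≠ 0 ∧
        {m : M | ∀ a b : Module.End R M, (a * φ * b) m = 0} = Set.range ψ)
    (hS : IsCentrallyAIPRing (Module.End R M)) :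
    IsCentrallyEndoAIP R M := by
  intro N hN φ hφ
  have hsub : ∀ n ∈ N, n ∈ rightAnnihilator φ := fun n hn a b => by
    simp [hφ _ (hN b n hn)]
  by_cases h0 : {m : M | ∀ a b : Module.End R M, (a * φ * b) m = 0} = {0}
  · refine ⟨1, fun n hn => ?_, fun g => by rw [one_mul, mul_one], mul_one φ⟩
    have hn0 : n ∈ ({0} : Set M) := h0 ▸ hsub n hn
    exact hn0
  · obtain ⟨ψ, -, hψ⟩ := hret φ h0
    have hinv := isFullyInvariant_rightAnnihilator φ
    obtain ⟨z, hz, hcentral, hφz⟩ := hS hinv.homIdeal φ fun x hx =>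
      LinearMap.ext fun m => hinv.mem_homIdeal.1 hx m 1 1
    have hmem : ψ ∈ hinv.homIdeal :=
      hinv.mem_homIdeal.2 fun m => hψ.symm.subset (Set.mem_range_self m)
    refine ⟨z, fun n hn => ?_, hcentral, hφz⟩
    obtain ⟨m, rfl⟩ := hψ.subset (hsub n hn)
    exact LinearMap.congr_fun (hz ψ hmem) m
end

section
/- Let M be a centrally endo-AIP right R-module with S = End_R(M). If S has right uniform dimension 1, i.e., the right S-module S_S is uniform (every two nonzero right ideals of S have nonzero intersection), then S is a prime ring. -/
/-- The submodule `S b M` generated by the images `s (b m)` is fully invariant. -/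
theorem isFullyInvariant_span_range_mul {R M : Type*} [Ring R] [AddCommGroup M] [Module R M]
    (b : Module.End R M) :
    IsFullyInvariant (Submodule.span R {x | ∃ (s : Module.End R M) (m : M), s (b m) = x}) := by
  intro φ n hn
  induction hn using Submodule.span_induction with
  | mem x hx =>
    obtain ⟨s, m, rfl⟩ := hx
    exact Submodule.subset_span ⟨φ * s, m, rfl⟩
  | zero => simp
  | add x y _ _ hx hy => simpa using add_mem hx hy
  | smul r x _ hx => simpa using Submodule.smul_mem _ r hx

/-- In a centrally endo-AIP module, `a S b = 0` is witnessed by an endomorphism that is a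
left identity for `a` and annihilates `b`. -/
theorem IsCentrallyEndoAIP.exists_mul_eq_self_of_mul_mul_eq_zero {R M : Type*} [Ring R]
    [AddCommGroup M] [Module R M] (h : IsCentrallyEndoAIP R M) {a b : Module.End R M}
    (hab : ∀ s : Module.End R M, a * s * b = 0) :
    ∃ ψ : Module.End R M, ψ * a = a ∧ ψ * b = 0 := by
  obtain ⟨ψ, hψN, hψc, hψa⟩ := h _ (isFullyInvariant_span_range_mul b) a <| by
    intro n hn
    induction hn using Submodule.span_induction with
    | mem x hx =>
      obtain ⟨s, m, rfl⟩ := hx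
      exact LinearMap.congr_fun (hab s) m
    | zero => simp
    | add x y _ _ hx hy => simp [hx, hy]
    | smul r x _ hx => simp [hx]
  refine ⟨ψ, (hψc a).trans hψa, LinearMap.ext fun m => ?_⟩
  exact hψN _ (Submodule.subset_span ⟨1, m, rfl⟩)

/-- If `M` is a centrally endo-AIP module whose endomorphism ring `S`
has right uniform dimension 1 (any two nonzero right ideals of `S` intersect
nontrivially), then `S` is a prime ring. -/
theorem stmt_17 (R M : Type*) [Ring R] [AddCommGroup M] [Module R M]
    (h : IsCentrallyEndoAIP R M)
    (huniform : ∀ I J : Submodule (Module.End R M)ᵐᵒᵖ (Module.End R M),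
      I ≠ ⊥ → J ≠ ⊥ → I ⊓ J ≠ ⊥) :
    ∀ a b : Module.End R M, (∀ s : Module.End R M, a * s * b = 0) → a = 0 ∨ b = 0 := by
  intro a b hab
  by_contra! hne
  obtain ⟨ψ, hψa, hψb⟩ := h.exists_mul_eq_self_of_mul_mul_eq_zero hab
  refine huniform (Submodule.span _ {a}) (Submodule.span _ {b})
    (by simpa using hne.1) (by simpa using hne.2) ?_
  rw [Submodule.eq_bot_iff]
  rintro x ⟨hxa, hxb⟩
  obtain ⟨s, rfl⟩ := Submodule.mem_span_singleton.mp hxa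
  obtain ⟨t, ht⟩ := Submodule.mem_span_singleton.mp hxb
  calc s • a = ψ * (s • a) := by rw [mul_smul_comm, hψa]
    _ = ψ * (t • b) := by rw [ht]
    _ = 0 := by rw [mul_smul_comm, hψb, smul_zero]
end

section
/- Let M be an endo-AIP right R-module with S = End_R(M). If S is a local ring, then S is a prime ring. -/
/-- The submodule `S b M` generated by the images of all `s * b`, `s ∈ S = End_R(M)`. -/
def endSpan {R M : Type*} [Ring R] [AddCommGroup M] [Module R M]
    (b : Module.End R M) : Submodule R M :=
  ⨆ s : Module.End R M, LinearMap.range (s * b)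

theorem isFullyInvariant_endSpan {R M : Type*} [Ring R] [AddCommGroup M] [Module R M]
    (b : Module.End R M) : IsFullyInvariant (endSpan b) := by
  intro φ
  change endSpan b ≤ (endSpan b).comap φ
  refine iSup_le fun s => ?_
  rintro _ ⟨m, rfl⟩
  exact Submodule.mem_iSup_of_mem (φ * s) ⟨m, rfl⟩

theorem endSpan_le_ker {R M : Type*} [Ring R] [AddCommGroup M] [Module R M]
    {a b : Module.End R M} (hab : ∀ s : Module.End R M, a * s * b = 0) :
    endSpan b ≤ LinearMap.ker a := by
  refine iSup_le fun s => ?_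
  rintro _ ⟨m, rfl⟩
  exact LinearMap.congr_fun (hab s) m

theorem apply_mem_endSpan {R M : Type*} [Ring R] [AddCommGroup M] [Module R M]
    (b : Module.End R M) (m : M) : b m ∈ endSpan b :=
  Submodule.mem_iSup_of_mem 1 ⟨m, rfl⟩

/-- If `M` is an endo-AIP module whose endomorphism ring `S` is local,
then `S` is a prime ring. -/
theorem stmt_18 (R M : Type*) [Ring R] [AddCommGroup M] [Module R M]
    (h : IsEndoAIP R M) (hlocal : IsLocalRing (Module.End R M)) :
    ∀ a b : Module.End R M, (∀ s : Module.End R M, a * s * b = 0) → a = 0 ∨ b = 0 := by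
  intro a b hab
  obtain ⟨ψ, hψ, haψ⟩ := h _ (isFullyInvariant_endSpan b) a fun _ hn => endSpan_le_ker hab hn
  have hψb : ψ * b = 0 := LinearMap.ext fun m => hψ _ (apply_mem_endSpan b m)
  rcases IsLocalRing.isUnit_or_isUnit_of_add_one (add_sub_cancel ψ 1) with hu | hu
  · exact Or.inr (hu.mul_right_eq_zero.mp hψb)
  · have ha : a * (1 - ψ) = 0 := by rw [mul_sub, mul_one, haψ, sub_self]
    exact Or.inl (hu.mul_left_eq_zero.mp ha)
end

section
/- Let M be a semiprime right R-module whose endomorphism ring S = End_R(M) satisfies the ascending chain condition on principal left ideals. Then the following are equivalent: (i) M is a quasi-Baer module; (ii) M is an endo-AIP module; (iii) M is a centrally endo-AIP module. -/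
/-- A fully invariant submodule `N` of `M` is *prime in `M`*: for every two-sided ideal
`T` of `S = End_R(M)` and every fully invariant submodule `N'` of `M`, if `T(N') ⊆ N`
then `T(M) ⊆ N` or `N' ⊆ N`. -/
def IsPrimeInModule {R M : Type*} [Ring R] [AddCommGroup M] [Module R M]
    (N : Submodule R M) : Prop :=
  IsFullyInvariant N ∧
  ∀ T : TwoSidedIdeal (Module.End R M), ∀ N' : Submodule R M, IsFullyInvariant N' →
    (∀ f ∈ T, ∀ n ∈ N', f n ∈ N) → (∀ f ∈ T, ∀ m : M, f m ∈ N) ∨ N' ≤ N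

/-- `M` is a *semiprime module*: the zero submodule is an intersection of prime
submodules of `M`. -/
def IsSemiprimeModule (R M : Type*) [Ring R] [AddCommGroup M] [Module R M] : Prop :=
  ∃ Ps : Set (Submodule R M), (∀ P ∈ Ps, IsPrimeInModule P) ∧ sInf Ps = ⊥

/-- `M` is a *quasi-Baer module*: the left annihilator of every fully invariant submodule
`N` of `M` in `S = End_R(M)` equals `Se` for some idempotent `e ∈ S`. -/
def IsQuasiBaerModule (R M : Type*) [Ring R] [AddCommGroup M] [Module R M] : Prop :=
  ∀ N : Submodule R M, IsFullyInvariant N →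
    ∃ e : Module.End R M, e * e = e ∧
      ∀ φ : Module.End R M, (∀ n ∈ N, φ n = 0) ↔ ∃ s : Module.End R M, φ = s * e

/-- The endomorphism ring `S` of a semiprime module is semiprime: `a S a = 0` implies `a = 0`. -/
theorem IsSemiprimeModule.eq_zero_of_mul_mul_eq_zero {R M : Type*} [Ring R] [AddCommGroup M]
    [Module R M] (h : IsSemiprimeModule R M) {a : Module.End R M}
    (ha : ∀ s : Module.End R M, a * s * a = 0) : a = 0 := by
  obtain ⟨Ps, hPs, hbot⟩ := h
  let N : Submodule R M := ⨅ s : Module.End R M, LinearMap.ker (a * s)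
  have mem_N (m : M) : m ∈ N ↔ ∀ s : Module.End R M, a (s m) = 0 := by
    simp [N, Submodule.mem_iInf]
  have hN : IsFullyInvariant N := fun φ n hn =>
    (mem_N _).2 fun s => (mem_N n).1 hn (s * φ)
  let T : TwoSidedIdeal (Module.End R M) := TwoSidedIdeal.mk' {f | ∀ n ∈ N, f n = 0}
    (fun _ _ => rfl)
    (fun {f g} hf hg n hn => by simp [hf n hn, hg n hn])
    (fun {f} hf n hn => by simp [hf n hn])
    (fun {f g} hg n hn => by simp [hg n hn])
    (fun {f g} hf n hn => hf _ (hN g n hn))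
  have mem_T (f : Module.End R M) : f ∈ T ↔ ∀ n ∈ N, f n = 0 := TwoSidedIdeal.mem_mk' ..
  have haT : a ∈ T := (mem_T a).2 fun n hn => (mem_N n).1 hn 1
  have haN (m : M) : a m ∈ N := (mem_N _).2 fun s => LinearMap.congr_fun (ha s) m
  ext m
  have hm : a m ∈ sInf Ps := by
    refine (Submodule.mem_sInf).2 fun P hP => ?_
    rcases (hPs P hP).2 T N hN fun f hf n hn => by
        rw [(mem_T f).1 hf n hn]; exact P.zero_mem with h | h
    · exact h a haT m
    · exact h (haN m)
  simpa [hbot] using hm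

/-- Under the ascending chain condition on principal left ideals, a right s-unital left ideal
is generated by an idempotent, which acts on it as a right identity. -/
theorem Ideal.exists_idempotent_right_identity_of_acc {S : Type*} [Ring S]
    (hacc : ∀ f : ℕ → S,
      (∀ n : ℕ, (Ideal.span {f n} : Ideal S) ≤ Ideal.span {f (n + 1)}) →
      ∃ n : ℕ, ∀ m : ℕ, n ≤ m → (Ideal.span {f m} : Ideal S) = Ideal.span {f n})
    (I : Ideal S) (hI : ∀ a ∈ I, ∃ x ∈ I, a * x = a) :
    ∃ e ∈ I, e * e = e ∧ ∀ b ∈ I, b * e = b := by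
  obtain ⟨a, ha, hmax⟩ : ∃ a ∈ I, ∀ b ∈ I, a ∈ Ideal.span {b} → b ∈ Ideal.span {a} := by
    by_contra! hcon
    choose! g hgI hg hg' using hcon
    have hmem (n : ℕ) : g^[n] 0 ∈ I := by
      induction n with
      | zero => exact I.zero_mem
      | succ n ih => rw [Function.iterate_succ_apply']; exact hgI _ ih
    obtain ⟨n, hn⟩ := hacc (fun n => g^[n] 0) fun n => by
      rw [Ideal.span_singleton_le_iff_mem, Function.iterate_succ_apply']
      exact hg _ (hmem n)
    apply hg' _ (hmem n)
    rw [← hn (n + 1) n.le_succ, Function.iterate_succ_apply']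
    exact Ideal.mem_span_singleton_self _
  obtain ⟨e, he, hae⟩ := hI a ha
  obtain ⟨s, hs⟩ := Ideal.mem_span_singleton'.1
    (hmax e he (Ideal.mem_span_singleton'.2 ⟨a, hae⟩))
  have hee : e * e = e := by
    nth_rewrite 1 [← hs]
    rw [mul_assoc, hae, hs]
  refine ⟨e, he, hee, fun b hb => ?_⟩
  obtain ⟨y, hy, hcy⟩ := hI (b - b * e) (I.sub_mem hb (I.mul_mem_left b he))
  have hz : e + y - e * y ∈ I := I.sub_mem (I.add_mem he hy) (I.mul_mem_left e hy)
  have hez : e * (e + y - e * y) = e := by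
    rw [mul_sub, mul_add, ← mul_assoc, hee]; abel
  have hbz : b * (e + y - e * y) = b := by
    have : b * (e + y - e * y) = b * e + (b - b * e) * y := by noncomm_ring
    rw [this, hcy]; abel
  have haz : a * (e + y - e * y) = a := by
    rw [← hae, mul_assoc, hez]
  obtain ⟨t, ht⟩ := Ideal.mem_span_singleton'.1
    (hmax _ hz (Ideal.mem_span_singleton'.2 ⟨a, haz⟩))
  rw [← hbz, ← ht, mul_assoc, mul_assoc, hae]

/-- A quasi-Baer module is endo-AIP. -/
theorem IsQuasiBaerModule.isEndoAIP {R M : Type*} [Ring R] [AddCommGroup M] [Module R M]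
    (h : IsQuasiBaerModule R M) : IsEndoAIP R M := by
  intro N hN φ hφ
  obtain ⟨e, hee, he⟩ := h N hN
  obtain ⟨s, rfl⟩ := (he φ).1 hφ
  exact ⟨e, (he e).2 ⟨e, hee.symm⟩, by rw [mul_assoc, hee]⟩

/-- A semiprime quasi-Baer module is centrally endo-AIP. -/
theorem IsQuasiBaerModule.isCentrallyEndoAIP {R M : Type*} [Ring R] [AddCommGroup M] [Module R M]
    (h : IsQuasiBaerModule R M) (hM : IsSemiprimeModule R M) : IsCentrallyEndoAIP R M := by
  intro N hN φ hφ
  obtain ⟨e, hee, he⟩ := h N hN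
  have heN : ∀ n ∈ N, e n = 0 := (he e).2 ⟨e, hee.symm⟩
  have hege (g : Module.End R M) : e * g * e = e * g := by
    obtain ⟨s, hs⟩ := (he (e * g)).1 fun n hn => heN _ (hN g n hn)
    rw [hs, mul_assoc, hee]
  have hge (g : Module.End R M) : g * e - e * g * e = 0 := by
    refine hM.eq_zero_of_mul_mul_eq_zero fun s => ?_
    have h₁ : e * s * (g * e - e * g * e) = 0 := by
      rw [mul_sub, ← mul_assoc, ← mul_assoc, ← mul_assoc, hege s, sub_self]
    have h₂ : (g * e - e * g * e) * s * (g * e - e * g * e) =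
        (g - e * g) * (e * s * (g * e - e * g * e)) := by noncomm_ring
    rw [h₂, h₁, mul_zero]
  obtain ⟨s, rfl⟩ := (he φ).1 hφ
  exact ⟨e, heN, fun g => by rw [sub_eq_zero.1 (hge g), hege], by rw [mul_assoc, hee]⟩

/-- A centrally endo-AIP module is endo-AIP. -/
theorem IsCentrallyEndoAIP.isEndoAIP {R M : Type*} [Ring R] [AddCommGroup M] [Module R M]
    (h : IsCentrallyEndoAIP R M) : IsEndoAIP R M := fun N hN φ hφ =>
  let ⟨ψ, hψ, _, hφψ⟩ := h N hN φ hφ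
  ⟨ψ, hψ, hφψ⟩

/-- An endo-AIP module whose endomorphism ring satisfies the ascending chain condition on
principal left ideals is quasi-Baer. -/
theorem IsEndoAIP.isQuasiBaerModule {R M : Type*} [Ring R] [AddCommGroup M] [Module R M]
    (h : IsEndoAIP R M)
    (hacc : ∀ f : ℕ → Module.End R M,
      (∀ n : ℕ, (Ideal.span {f n} : Ideal (Module.End R M)) ≤ Ideal.span {f (n + 1)}) →
      ∃ n : ℕ, ∀ m : ℕ, n ≤ m →
        (Ideal.span {f m} : Ideal (Module.End R M)) = Ideal.span {f n}) :
    IsQuasiBaerModule R M := by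
  intro N hN
  let I : Ideal (Module.End R M) :=
    { carrier := {φ | ∀ n ∈ N, φ n = 0}
      zero_mem' := fun _ _ => rfl
      add_mem' := fun {f g} hf hg n hn => by simp [hf n hn, hg n hn]
      smul_mem' := fun c f hf n hn => by simp [hf n hn] }
  obtain ⟨e, he, hee, hright⟩ :=
    I.exists_idempotent_right_identity_of_acc hacc (h N hN)
  refine ⟨e, hee, fun φ => ⟨fun hφ => ⟨φ, (hright φ hφ).symm⟩, ?_⟩⟩
  rintro ⟨s, rfl⟩
  exact I.mul_mem_left s he

/-- For a semiprime module `M` whose endomorphism ring satisfies the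
ascending chain condition on principal left ideals, the conditions quasi-Baer,
endo-AIP and centrally endo-AIP are equivalent. -/
theorem stmt_19 (R M : Type*) [Ring R] [AddCommGroup M] [Module R M]
    (hsemiprime : IsSemiprimeModule R M)
    (hacc : ∀ f : ℕ → Module.End R M,
      (∀ n : ℕ, (Ideal.span {f n} : Ideal (Module.End R M)) ≤ Ideal.span {f (n + 1)}) →
      ∃ n : ℕ, ∀ m : ℕ, n ≤ m →
        (Ideal.span {f m} : Ideal (Module.End R M)) = Ideal.span {f n}) :
    (IsQuasiBaerModule R M ↔ IsEndoAIP R M) ∧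
    (IsEndoAIP R M ↔ IsCentrallyEndoAIP R M) := by
  exact ⟨⟨IsQuasiBaerModule.isEndoAIP, fun h => h.isQuasiBaerModule hacc⟩,
    fun h => (h.isQuasiBaerModule hacc).isCentrallyEndoAIP hsemiprime,
    IsCentrallyEndoAIP.isEndoAIP⟩
end
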